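/- Let X be a bounded geometry metric space. Then the following two conditions are equivalent: (1) for all R, ε > 0 there exists S > 0 such that for every finite subset F ⊆ X there exists a finitely supported function φ ∈ ℓ¹(X) with diam(supp(φ)) ≤ S and ∑_{x ∈ F} ∑_{y ∈ F, d(x,y) ≤ R} |φ(x) − φ(y)| < ε · ∑_{x ∈ F} |φ(x)|; (2) for all R, ε > 0 there exists S > 0 such that for every finite subset F ⊆ X there exists a finite subset E ⊆ X with diam(E) ≤ S and |∂_R E ∩ F| < ε · |E ∩ F|. -/

import Mathlib

/-- `N_R(E)`, the `R`-neighbourhood of `E`. -/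
def nbhd {X : Type*} [MetricSpace X] (R : ℝ) (E : Set X) : Set X :=
  {y | ∃ e ∈ E, dist y e ≤ R}

/-- `∂_R E = N_R(E) \ E`. -/
def bdry {X : Type*} [MetricSpace X] (R : ℝ) (E : Set X) : Set X :=
  nbhd R E \ E

/-- Bounded geometry. -/
def BoundedGeometry (X : Type*) [MetricSpace X] : Prop :=
  ∀ R : ℝ, 0 < R → ∃ N : ℕ, ∀ x : X,
    {y | dist x y ≤ R}.Finite ∧ {y | dist x y ≤ R}.ncard ≤ N

/-- A probability measure on `X`, as a function. -/
def IsProbFn {X : Type*} (μ : X → ℝ) : Prop :=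
  (∀ x, 0 ≤ μ x) ∧ Summable μ ∧ ∑' x, μ x = 1

/-- `μ(E)`. -/
noncomputable def measOf {X : Type*} (μ : X → ℝ) (E : Set X) : ℝ := ∑' x : E, μ x

/-- Uniform local amenability. -/
def ULA (X : Type*) [MetricSpace X] : Prop :=
  ∀ R : ℝ, 0 < R → ∀ ε : ℝ, 0 < ε → ∃ S : ℝ, 0 < S ∧
    ∀ F : Set X, F.Finite → ∃ E : Set X, E.Finite ∧
      EMetric.diam E ≤ ENNReal.ofReal S ∧
      ((bdry R E ∩ F).ncard : ℝ) < ε * ((E ∩ F).ncard : ℝ)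

/-- Measured uniform local amenability. -/
def ULAmu (X : Type*) [MetricSpace X] : Prop :=
  ∀ R : ℝ, 0 < R → ∀ ε : ℝ, 0 < ε → ∃ S : ℝ, 0 < S ∧
    ∀ μ : X → ℝ, IsProbFn μ → ∃ E : Set X, E.Finite ∧
      EMetric.diam E ≤ ENNReal.ofReal S ∧
      measOf μ (bdry R E) < ε * measOf μ E

/-- Coarse embedding. -/
def CoarseEmbedding {X Y : Type*} [MetricSpace X] [MetricSpace Y] (f : X → Y) : Prop :=
  ∃ ρm ρp : ℝ → ℝ, Monotone ρm ∧ Monotone ρp ∧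
    Filter.Tendsto ρm Filter.atTop Filter.atTop ∧
    ∀ x₁ x₂ : X, ρm (dist x₁ x₂) ≤ dist (f x₁) (f x₂) ∧
      dist (f x₁) (f x₂) ≤ ρp (dist x₁ x₂)

/-!
Both directions compare, on a finite set `F`, the variation `∑ |φ x - φ y|` over pairs of points of
`F` at distance at most `R` with the mass `∑ |φ x|`.

The variation of the indicator of `E` only sees pairs one of whose points lies in `∂_R E ∩ F`, so
if balls of radius `R` have at most `N` points it is at most `2 N |∂_R E ∩ F|`.

Conversely, the mass of `φ` is the integral over `r ≥ 0` of the sizes of the superlevel sets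
`{x ∈ F | r < |φ x|}`, while the variation of `φ` is at least the integral of the number of pairs
with `|φ y| ≤ r < |φ x|`, which bounds the size of their `R`-boundaries inside `F`. If the
integrals satisfy a strict inequality, then so do the integrands at some `r`.
-/

section CardFilter

open MeasureTheory
open scoped Finset ENNReal

theorem natCast_card_filter_mem {Ω ι : Type*} {A : ι → Set Ω} (s : Finset ι) (ω : Ω)
    [DecidablePred (ω ∈ A ·)] :
    (#{i ∈ s | ω ∈ A i} : ℝ) = ∑ i ∈ s, (A i).indicator 1 ω := by
  simp [Set.indicator_apply]

section Measure

variable {Ω ι κ : Type*} [MeasurableSpace Ω] {μ : Measure Ω}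
  {A : ι → Set Ω} [∀ ω, DecidablePred (ω ∈ A ·)] {B : κ → Set Ω} [∀ ω, DecidablePred (ω ∈ B ·)]
  {s : Finset ι} {t : Finset κ}

theorem integrable_card_filter_mem (hA : ∀ i ∈ s, MeasurableSet (A i))
    (hμA : ∀ i ∈ s, μ (A i) ≠ ∞) : Integrable (fun ω ↦ (#{i ∈ s | ω ∈ A i} : ℝ)) μ := by
  simp_rw [natCast_card_filter_mem]
  exact integrable_finsetSum s fun i hi ↦
    (integrable_indicator_iff (hA i hi)).2 (integrableOn_const (hμA i hi))

theorem integral_card_filter_mem (hA : ∀ i ∈ s, MeasurableSet (A i))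
    (hμA : ∀ i ∈ s, μ (A i) ≠ ∞) :
    ∫ ω, (#{i ∈ s | ω ∈ A i} : ℝ) ∂μ = ∑ i ∈ s, μ.real (A i) := by
  simp_rw [natCast_card_filter_mem]
  rw [integral_finsetSum s fun i hi ↦
    (integrable_indicator_iff (hA i hi)).2 (integrableOn_const (hμA i hi))]
  exact Finset.sum_congr rfl fun i hi ↦ integral_indicator_one (hA i hi)

theorem exists_card_filter_mem_lt_mul (hA : ∀ i ∈ s, MeasurableSet (A i))
    (hμA : ∀ i ∈ s, μ (A i) ≠ ∞) (hB : ∀ j ∈ t, MeasurableSet (B j))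
    (hμB : ∀ j ∈ t, μ (B j) ≠ ∞) {c : ℝ}
    (h : ∑ i ∈ s, μ.real (A i) < c * ∑ j ∈ t, μ.real (B j)) :
    ∃ ω, (#{i ∈ s | ω ∈ A i} : ℝ) < c * #{j ∈ t | ω ∈ B j} := by
  contrapose! h
  rw [← integral_card_filter_mem hA hμA, ← integral_card_filter_mem hB hμB, ← integral_const_mul]
  exact integral_mono ((integrable_card_filter_mem hB hμB).const_mul c)
    (integrable_card_filter_mem hA hμA) h

end Measure

theorem exists_card_filter_Ico_lt_mul {ι κ : Type*} {s : Finset ι} {t : Finset κ}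
    {a b : ι → ℝ} {f : κ → ℝ} (hf : ∀ j ∈ t, 0 ≤ f j) {c : ℝ}
    (h : ∑ i ∈ s, |b i - a i| < c * ∑ j ∈ t, f j) :
    ∃ r, 0 ≤ r ∧ (#{i ∈ s | r ∈ Set.Ico (a i) (b i)} : ℝ) < c * #{j ∈ t | r < f j} := by
  have h_length : ∑ i ∈ s, volume.real (Set.Ico (a i) (b i)) <
      c * ∑ j ∈ t, volume.real (Set.Ico 0 (f j)) := by
    calc ∑ i ∈ s, volume.real (Set.Ico (a i) (b i))
        ≤ ∑ i ∈ s, |b i - a i| := by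
          gcongr with i
          rw [Real.volume_real_Ico]
          exact max_le (le_abs_self _) (abs_nonneg _)
      _ < c * ∑ j ∈ t, f j := h
      _ = c * ∑ j ∈ t, volume.real (Set.Ico 0 (f j)) := by
          congr 1
          exact Finset.sum_congr rfl fun j hj ↦ by simp [hf j hj]
  obtain ⟨r, hr⟩ := exists_card_filter_mem_lt_mul (fun _ _ ↦ measurableSet_Ico)
    (fun _ _ ↦ by simp) (fun _ _ ↦ measurableSet_Ico) (fun _ _ ↦ by simp) h_length
  have hr_nonneg : 0 ≤ r := by
    by_contra h_neg
    simp only [Set.mem_Ico, h_neg, false_and, Finset.filter_false, Finset.card_empty,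
      Nat.cast_zero, mul_zero] at hr
    exact hr.not_ge (Nat.cast_nonneg _)
  exact ⟨r, hr_nonneg, by simpa only [Set.mem_Ico, hr_nonneg, true_and] using hr⟩

theorem sum_indicator_one_eq_ncard_inter {X : Type*} (E : Set X) (F : Finset X) :
    ∑ x ∈ F, E.indicator (1 : X → ℝ) x = (E ∩ F).ncard := by
  classical
  have h_coe : E ∩ F = ({x ∈ F | x ∈ E} : Finset X) := by
    rw [Finset.coe_filter, Set.inter_comm]
    rfl
  rw [h_coe, Set.ncard_coe_finset]
  simp [Set.indicator_apply]

end CardFilter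

section NearPairs

open scoped Finset

variable {X : Type*} [PseudoMetricSpace X] {R : ℝ} {F : Finset X}

/-- The index set of the double sum in the functional condition: ordered pairs of points of `F` at
distance at most `R`, the diagonal included. -/
noncomputable def nearPairs (R : ℝ) (F : Finset X) : Finset (X × X) :=
  {p ∈ F ×ˢ F | dist p.1 p.2 ≤ R}

theorem mem_nearPairs {p : X × X} :
    p ∈ nearPairs R F ↔ p.1 ∈ F ∧ p.2 ∈ F ∧ dist p.1 p.2 ≤ R := by
  simp [nearPairs, and_assoc]

theorem sum_nearPairs {M : Type*} [AddCommMonoid M] (R : ℝ) (F : Finset X) (g : X × X → M) :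
    ∑ p ∈ nearPairs R F, g p = ∑ x ∈ F, ∑ y ∈ F with dist x y ≤ R, g (x, y) :=
  Finset.sum_finset_product _ _ _ fun p ↦ by simp [mem_nearPairs]

theorem tsum_tsum_dist_le_eq_sum_nearPairs {M : Type*} [AddCommMonoid M] [TopologicalSpace M]
    (R : ℝ) (F : Finset X) (g : X × X → M) :
    ∑' x : (F : Set X), ∑' y : {y : X | y ∈ (F : Set X) ∧ dist (x : X) y ≤ R}, g (x, y) =
      ∑ p ∈ nearPairs R F, g p := by
  have h_inner (x : X) : ∑' y : {y : X | y ∈ (F : Set X) ∧ dist x y ≤ R}, g (x, y) =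
      ∑ y ∈ F with dist x y ≤ R, g (x, y) := by
    rw [← Finset.tsum_subtype', Finset.coe_filter]
    rfl
  simp_rw [h_inner, sum_nearPairs]
  exact F.tsum_subtype' fun x ↦ ∑ y ∈ F with dist x y ≤ R, g (x, y)

theorem tsum_tsum_abs_sub_lt_iff {φ : X → ℝ} {ε : ℝ} :
    (∑' x : (F : Set X), ∑' y : {y : X | y ∈ (F : Set X) ∧ dist (x : X) y ≤ R}, |φ x - φ y|) <
        ε * ∑' x : (F : Set X), |φ x| ↔
      ∑ p ∈ nearPairs R F, |φ p.1 - φ p.2| < ε * ∑ x ∈ F, |φ x| := by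
  rw [tsum_tsum_dist_le_eq_sum_nearPairs R F fun p ↦ |φ p.1 - φ p.2|,
    F.tsum_subtype' fun x ↦ |φ x|]

theorem sum_nearPairs_snd_eq_sum_nearPairs_fst {M : Type*} [AddCommMonoid M]
    (R : ℝ) (F : Finset X) (f : X → M) :
    ∑ p ∈ nearPairs R F, f p.2 = ∑ p ∈ nearPairs R F, f p.1 :=
  Finset.sum_equiv (Equiv.prodComm X X) (by simp [mem_nearPairs, dist_comm, and_left_comm])
    fun _ _ ↦ rfl

theorem sum_nearPairs_fst_le {f : X → ℝ} (hf : ∀ x ∈ F, 0 ≤ f x) {N : ℕ}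
    (hN : ∀ x ∈ F, #{y ∈ F | dist x y ≤ R} ≤ N) :
    ∑ p ∈ nearPairs R F, f p.1 ≤ N * ∑ x ∈ F, f x := by
  simp only [sum_nearPairs, Finset.sum_const, nsmul_eq_mul, Finset.mul_sum]
  gcongr with x hx
  · exact hf x hx
  · exact hN x hx

end NearPairs

section Boundary

open scoped Finset

variable {X : Type*} [MetricSpace X] {R : ℝ} {F : Finset X}

theorem abs_indicator_sub_indicator_le_indicator_bdry (E : Set X) {x y : X} (hxy : dist x y ≤ R) :
    |E.indicator (1 : X → ℝ) x - E.indicator 1 y| ≤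
      (bdry R E).indicator 1 x + (bdry R E).indicator 1 y := by
  have h_nonneg (z : X) : 0 ≤ (bdry R E).indicator (1 : X → ℝ) z :=
    Set.indicator_nonneg (fun _ _ ↦ zero_le_one) z
  by_cases hx : x ∈ E <;> by_cases hy : y ∈ E
  · simpa [hx, hy] using add_nonneg (h_nonneg x) (h_nonneg y)
  · have hy_bdry : y ∈ bdry R E := ⟨⟨x, hx, dist_comm x y ▸ hxy⟩, hy⟩
    simpa [hx, hy, hy_bdry] using h_nonneg x
  · have hx_bdry : x ∈ bdry R E := ⟨⟨y, hy, hxy⟩, hx⟩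
    simpa [hx, hy, hx_bdry] using h_nonneg y
  · simpa [hx, hy] using add_nonneg (h_nonneg x) (h_nonneg y)

theorem sum_nearPairs_abs_indicator_sub_le (E : Set X) {N : ℕ}
    (hN : ∀ x ∈ F, #{y ∈ F | dist x y ≤ R} ≤ N) :
    ∑ p ∈ nearPairs R F, |E.indicator (1 : X → ℝ) p.1 - E.indicator 1 p.2| ≤
      2 * N * (bdry R E ∩ F).ncard := by
  calc ∑ p ∈ nearPairs R F, |E.indicator (1 : X → ℝ) p.1 - E.indicator 1 p.2|
      ≤ ∑ p ∈ nearPairs R F, ((bdry R E).indicator 1 p.1 + (bdry R E).indicator 1 p.2) :=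
        Finset.sum_le_sum fun p hp ↦
          abs_indicator_sub_indicator_le_indicator_bdry E (mem_nearPairs.1 hp).2.2
    _ = 2 * ∑ p ∈ nearPairs R F, (bdry R E).indicator (1 : X → ℝ) p.1 := by
        rw [Finset.sum_add_distrib, sum_nearPairs_snd_eq_sum_nearPairs_fst, two_mul]
    _ ≤ 2 * (N * ∑ x ∈ F, (bdry R E).indicator (1 : X → ℝ) x) := by
        gcongr
        exact sum_nearPairs_fst_le (fun x _ ↦ Set.indicator_nonneg (fun _ _ ↦ zero_le_one) x) hN
    _ = 2 * N * (bdry R E ∩ F).ncard := by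
        rw [sum_indicator_one_eq_ncard_inter, mul_assoc]

theorem ncard_bdry_superlevel_inter_le (R : ℝ) (F : Finset X) (f : X → ℝ) (r : ℝ) :
    (bdry R (F ∩ {x | r < f x}) ∩ F).ncard ≤
      #{p ∈ nearPairs R F | r ∈ Set.Ico (f p.2) (f p.1)} := by
  classical
  set P : Finset (X × X) := {p ∈ nearPairs R F | r ∈ Set.Ico (f p.2) (f p.1)}
  have h_subset : bdry R (F ∩ {x | r < f x}) ∩ F ⊆ (P.image Prod.snd : Finset X) := by
    rintro y ⟨⟨⟨x, ⟨hxF, hrx⟩, hyx⟩, hy⟩, hyF⟩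
    have hry : f y ≤ r := le_of_not_gt fun h ↦ hy ⟨hyF, h⟩
    exact Finset.mem_image.2 ⟨(x, y), Finset.mem_filter.2
      ⟨mem_nearPairs.2 ⟨hxF, hyF, dist_comm x y ▸ hyx⟩, hry, hrx⟩, rfl⟩
  calc (bdry R (F ∩ {x | r < f x}) ∩ F).ncard
      ≤ #(P.image Prod.snd) := by
        simpa only [Set.ncard_coe_finset] using
          Set.ncard_le_ncard h_subset (Finset.finite_toSet _)
    _ ≤ #P := Finset.card_image_le

theorem exists_subset_support_ncard_bdry_inter_lt {φ : X → ℝ} {ε : ℝ}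
    (h : ∑ p ∈ nearPairs R F, |φ p.1 - φ p.2| < ε * ∑ x ∈ F, |φ x|) :
    ∃ E ⊆ Function.support φ, E.Finite ∧
      ((bdry R E ∩ F).ncard : ℝ) < ε * (E ∩ F).ncard := by
  have h_abs : ∑ p ∈ nearPairs R F, |(|φ p.1| - |φ p.2|)| < ε * ∑ x ∈ F, |φ x| :=
    (Finset.sum_le_sum fun p _ ↦ abs_abs_sub_abs_le (φ p.1) (φ p.2)).trans_lt h
  obtain ⟨r, hr_nonneg, hr⟩ := exists_card_filter_Ico_lt_mul (a := fun p : X × X ↦ |φ p.2|)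
    (b := fun p ↦ |φ p.1|) (fun x _ ↦ abs_nonneg (φ x)) h_abs
  -- Points outside `F` do not enter the double sum, so the superlevel set is cut down to `F`.
  set E : Set X := F ∩ {x | r < |φ x|}
  have h_card : #{x ∈ F | r < |φ x|} = (E ∩ F).ncard := by
    rw [Set.inter_eq_left.2 Set.inter_subset_left, ← Set.ncard_coe_finset, Finset.coe_filter]
    rfl
  refine ⟨E, fun x hx ↦ abs_pos.1 (hr_nonneg.trans_lt hx.2), F.finite_toSet.inter_of_left _, ?_⟩
  calc ((bdry R E ∩ F).ncard : ℝ)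
      ≤ #{p ∈ nearPairs R F | r ∈ Set.Ico |φ p.2| |φ p.1|} :=
        mod_cast ncard_bdry_superlevel_inter_le R F (fun x ↦ |φ x|) r
    _ < ε * #{x ∈ F | r < |φ x|} := hr
    _ = ε * (E ∩ F).ncard := by rw [h_card]

theorem sum_nearPairs_abs_indicator_sub_lt {E : Set X} {N : ℕ} {ε : ℝ}
    (hN : ∀ x ∈ F, #{y ∈ F | dist x y ≤ R} ≤ N)
    (h : ((bdry R E ∩ F).ncard : ℝ) < ε / (2 * N + 1) * (E ∩ F).ncard) :
    ∑ p ∈ nearPairs R F, |E.indicator (1 : X → ℝ) p.1 - E.indicator 1 p.2| <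
      ε * ∑ x ∈ F, |E.indicator (1 : X → ℝ) x| := by
  have h_mass : ∑ x ∈ F, |E.indicator (1 : X → ℝ) x| = (E ∩ F).ncard := by
    rw [← sum_indicator_one_eq_ncard_inter]
    exact Finset.sum_congr rfl fun x _ ↦
      abs_of_nonneg (Set.indicator_nonneg (fun _ _ ↦ zero_le_one) x)
  calc ∑ p ∈ nearPairs R F, |E.indicator (1 : X → ℝ) p.1 - E.indicator 1 p.2|
      ≤ 2 * N * (bdry R E ∩ F).ncard := sum_nearPairs_abs_indicator_sub_le E hN
    _ ≤ (2 * N + 1) * (bdry R E ∩ F).ncard := by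
        gcongr
        exact le_add_of_nonneg_right zero_le_one
    _ < (2 * N + 1) * (ε / (2 * N + 1) * (E ∩ F).ncard) := by gcongr
    _ = ε * ∑ x ∈ F, |E.indicator (1 : X → ℝ) x| := by
        rw [h_mass]
        field_simp

theorem BoundedGeometry.exists_card_filter_dist_le (hbg : BoundedGeometry X) (hR : 0 < R) :
    ∃ N : ℕ, ∀ (F : Finset X) (x : X), #{y ∈ F | dist x y ≤ R} ≤ N := by
  obtain ⟨N, hN⟩ := hbg R hR
  refine ⟨N, fun F x ↦ ?_⟩
  rw [← Set.ncard_coe_finset]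
  exact (Set.ncard_le_ncard (fun y hy ↦ (Finset.mem_filter.1 hy).2) (hN x).1).trans (hN x).2

end Boundary

-- For `F = ∅` both strict inequalities fail; the conditions have content for families `𝓕` of
-- nonempty sets.
theorem ula_function_iff_set_general {X : Type*} [MetricSpace X] (hbg : BoundedGeometry X)
    {𝓕 : Set (Set X)} (h𝓕 : ∀ F ∈ 𝓕, F.Finite) :
    (∀ R : ℝ, 0 < R → ∀ ε : ℝ, 0 < ε → ∃ S : ℝ, 0 < S ∧
      ∀ F ∈ 𝓕, ∃ φ : X → ℝ,
        (Function.support φ).Finite ∧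
        Metric.ediam (Function.support φ) ≤ ENNReal.ofReal S ∧
        (∑' x : F, ∑' y : {y : X | y ∈ F ∧ dist (x : X) y ≤ R}, |φ x - φ y|)
          < ε * ∑' x : F, |φ (x : X)|)
    ↔
    (∀ R : ℝ, 0 < R → ∀ ε : ℝ, 0 < ε → ∃ S : ℝ, 0 < S ∧
      ∀ F ∈ 𝓕, ∃ E : Set X, E.Finite ∧
        Metric.ediam E ≤ ENNReal.ofReal S ∧
        ((bdry R E ∩ F).ncard : ℝ) < ε * ((E ∩ F).ncard : ℝ)) := by
  constructor
  · intro h R hR ε hε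
    obtain ⟨S, hS, hF⟩ := h R hR ε hε
    refine ⟨S, hS, fun F hF𝓕 ↦ ?_⟩
    obtain ⟨φ, -, hdiam, hφ⟩ := hF F hF𝓕
    lift F to Finset X using h𝓕 F hF𝓕
    obtain ⟨E, hEφ, hE_fin, hE⟩ :=
      exists_subset_support_ncard_bdry_inter_lt (tsum_tsum_abs_sub_lt_iff.1 hφ)
    exact ⟨E, hE_fin, (Metric.ediam_mono hEφ).trans hdiam, hE⟩
  · intro h R hR ε hε
    obtain ⟨N, hN⟩ := hbg.exists_card_filter_dist_le hR
    obtain ⟨S, hS, hF⟩ := h R hR (ε / (2 * N + 1)) (by positivity)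
    refine ⟨S, hS, fun F hF𝓕 ↦ ?_⟩
    obtain ⟨E, hE_fin, hdiam, hE⟩ := hF F hF𝓕
    have h_supp : Function.support (E.indicator (1 : X → ℝ)) = E := by simp
    lift F to Finset X using h𝓕 F hF𝓕
    refine ⟨E.indicator 1, by rwa [h_supp], by rwa [h_supp], ?_⟩
    exact tsum_tsum_abs_sub_lt_iff.2 <|
      sum_nearPairs_abs_indicator_sub_lt (fun x _ ↦ hN F x) hE

/-- Lemma 2.4 (for $ULA$): the 'function' (Reiter-type) formulation and the 'set'
(Følner-type) formulation are equivalent for any bounded geometry metric space. -/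
theorem ula_function_iff_set {X : Type*} [MetricSpace X] (hbg : BoundedGeometry X) :
    (∀ R : ℝ, 0 < R → ∀ ε : ℝ, 0 < ε → ∃ S : ℝ, 0 < S ∧
      ∀ F : Set X, F.Finite → ∃ φ : X → ℝ,
        (Function.support φ).Finite ∧
        EMetric.diam (Function.support φ) ≤ ENNReal.ofReal S ∧
        (∑' x : F, ∑' y : {y : X | y ∈ F ∧ dist (x : X) y ≤ R}, |φ x - φ y|)
          < ε * ∑' x : F, |φ (x : X)|)
    ↔
    (∀ R : ℝ, 0 < R → ∀ ε : ℝ, 0 < ε → ∃ S : ℝ, 0 < S ∧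
      ∀ F : Set X, F.Finite → ∃ E : Set X, E.Finite ∧
        EMetric.diam E ≤ ENNReal.ofReal S ∧
        ((bdry R E ∩ F).ncard : ℝ) < ε * ((E ∩ F).ncard : ℝ)) :=
  ula_function_iff_set_general hbg (𝓕 := {F | F.Finite}) fun _ hF ↦ hF
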